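/- arXiv:1610.06760 — 2 statements merged into one kernel-verified Lean document; each statement's English description precedes it below -/
import Mathlib

section
/- Fix a real number β < 1 and for n ≥ 2 set B_n = (1 + 2(n−1)(1−β))/n. Let f(z) = z + Σ_{n≥2} a_n zⁿ be analytic on the open unit disc 𝔻 with Re((1−z)f′(z)) > β for all z ∈ 𝔻. Then |a_n| ≤ B_n for every integer n ≥ 2. -/
/-!
Write `(1 - z) f'(z) = ∑ cₖ zᵏ`. Then `c₀ = a₁` and `cₖ = (k + 1) aₖ₊₁ - k aₖ`, so Carathéodory's
bound `|cₖ| ≤ 2 (Re c₀ - β)` controls the increments of `k ↦ k aₖ`, and these are summed from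
`k = 1` to `n - 1`.

Carathéodory's bound for a function `p` with `Re p ≥ 0` follows by averaging `p` over the circle
`|z - c| = R` against the nonnegative trigonometric polynomial `2 + 2 Re (w (R / (z - c))ᵏ)`, where
`|w| ≤ 1`. With `d = Rᵏ p⁽ᵏ⁾(c) / k!` the average is `2 p(c) + w d`; its real part is nonnegative,
and `w` is chosen so that `w d = -|d|`.
-/

open Complex Metric Real Filter Topology
open scoped ComplexConjugate Nat

section CircleAverage

variable {c w : ℂ} {R : ℝ} {p : ℂ → ℂ} {k : ℕ}

lemma circleAverage_div_sub_pow_mul (hR : 0 < R) (hp : DiffContOnCl ℂ p (ball c R)) (k : ℕ) :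
    circleAverage (fun z ↦ (R / (z - c)) ^ k * p z) c R = R ^ k * (iteratedDeriv k p c / k !) := by
  have integrand_eq : (fun z ↦ (z - c)⁻¹ • ((R / (z - c)) ^ k * p z)) =
      fun z ↦ (R : ℂ) ^ k • (1 / (z - c) ^ (k + 1)) • p z := by
    funext z
    simp only [smul_eq_mul, div_pow, pow_succ, one_div, mul_inv]
    ring
  rw [circleAverage_eq_circleIntegral hR.ne', integrand_eq, circleIntegral.integral_smul,
    hp.circleIntegral_one_div_sub_center_pow_smul hR k]
  have := two_pi_I_ne_zero
  simp only [smul_eq_mul]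
  field_simp

lemma circleAverage_sub_div_pow_mul (hp : DiffContOnCl ℂ p (ball c |R|)) (hk : k ≠ 0) :
    circleAverage (fun z ↦ ((z - c) / R) ^ k * p z) c R = 0 := by
  have hpow : DiffContOnCl ℂ (fun z : ℂ ↦ ((z - c) / R) ^ k) (ball c |R|) :=
    Differentiable.diffContOnCl (by fun_prop)
  simpa [hk] using (hpow.smul hp).circleAverage

lemma conj_div_sub_of_mem_sphere {z : ℂ} (hz : z ∈ sphere c R) :
    conj (R / (z - c)) = (z - c) / R := by
  obtain rfl : ‖z - c‖ = R := mem_sphere_iff_norm.mp hz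
  rcases eq_or_ne (z - c) 0 with h | h
  · simp [h]
  · have hnorm : (‖z - c‖ : ℂ) ≠ 0 := by simpa using h
    have hconj : conj (z - c) ≠ 0 := (map_ne_zero _).mpr h
    rw [map_div₀, conj_ofReal, div_eq_div_iff hconj hnorm, mul_conj, normSq_eq_norm_sq]
    push_cast
    ring

lemma two_mul_re_mul_div_sub_pow_of_mem_sphere {z : ℂ} (hz : z ∈ sphere c R) (w : ℂ) (k : ℕ) :
    ((2 * (w * (R / (z - c)) ^ k).re : ℝ) : ℂ) =
      w * (R / (z - c)) ^ k + conj w * ((z - c) / R) ^ k := by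
  rw [← add_conj, map_mul, map_pow, conj_div_sub_of_mem_sphere hz]

lemma circleAverage_two_add_two_re_mul (hR : 0 < R) (hp : DiffContOnCl ℂ p (ball c R))
    (hk : k ≠ 0) (w : ℂ) :
    circleAverage (fun z ↦ (2 + 2 * (w * (R / (z - c)) ^ k).re) • p z) c R =
      2 * p c + w * (R ^ k * (iteratedDeriv k p c / k !)) := by
  have hp' : DiffContOnCl ℂ p (ball c |R|) := by rwa [abs_of_pos hR]
  have hpc : ContinuousOn p (sphere c R) :=
    hp.continuousOn_ball.mono sphere_subset_closedBall
  have hne : ∀ z ∈ sphere c R, z - c ≠ 0 := fun z hz ↦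
    sub_ne_zero.mpr (ne_of_mem_sphere hz hR.ne')
  have int_p : CircleIntegrable (fun z ↦ (2 : ℂ) • p z) c R :=
    ContinuousOn.circleIntegrable hR.le (by fun_prop)
  have int_neg : CircleIntegrable (fun z ↦ w • ((R / (z - c)) ^ k * p z)) c R :=
    ContinuousOn.circleIntegrable hR.le (by fun_prop (disch := assumption))
  have int_pos : CircleIntegrable (fun z ↦ conj w • (((z - c) / R) ^ k * p z)) c R :=
    ContinuousOn.circleIntegrable hR.le (by fun_prop)
  have int_add : CircleIntegrable (fun z ↦ (2 : ℂ) • p z + w • ((R / (z - c)) ^ k * p z)) c R :=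
    int_p.add int_neg
  have expand : Set.EqOn (fun z ↦ (2 + 2 * (w * (R / (z - c)) ^ k).re) • p z)
      (fun z ↦ (2 : ℂ) • p z + w • ((R / (z - c)) ^ k * p z) +
        conj w • (((z - c) / R) ^ k * p z)) (sphere c |R|) := by
    intro z hz
    rw [abs_of_pos hR] at hz
    simp only [real_smul, smul_eq_mul, ofReal_add, ofReal_ofNat,
      two_mul_re_mul_div_sub_pow_of_mem_sphere hz]
    ring
  rw [circleAverage_congr_sphere expand, circleAverage_fun_add int_add int_pos,
    circleAverage_fun_add int_p int_neg, circleAverage_fun_smul, circleAverage_fun_smul,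
    circleAverage_fun_smul, hp'.circleAverage, circleAverage_div_sub_pow_mul hR hp,
    circleAverage_sub_div_pow_mul hp' hk]
  simp

lemma two_add_two_re_mul_div_sub_pow_nonneg (hw : ‖w‖ ≤ 1) {z : ℂ} (hz : z ∈ sphere c R) :
    0 ≤ 2 + 2 * (w * (R / (z - c)) ^ k).re := by
  have hnorm : ‖w * (R / (z - c)) ^ k‖ ≤ 1 := by
    obtain rfl : ‖z - c‖ = R := mem_sphere_iff_norm.mp hz
    have : ‖(‖z - c‖ / (z - c) : ℂ)‖ ≤ 1 := by simpa using div_self_le_one ‖z - c‖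
    rw [norm_mul, norm_pow]
    exact mul_le_one₀ hw (by positivity) (pow_le_one₀ (norm_nonneg _) this)
  linarith [neg_le_of_abs_le ((abs_re_le_norm _).trans hnorm)]

end CircleAverage

section Caratheodory

variable {c : ℂ} {R : ℝ} {p : ℂ → ℂ} {k : ℕ}

lemma two_re_add_re_mul_iteratedDeriv_nonneg (hR : 0 < R) (hp : DiffContOnCl ℂ p (ball c R))
    (hre : ∀ z ∈ sphere c R, 0 ≤ (p z).re) (hk : k ≠ 0) {w : ℂ} (hw : ‖w‖ ≤ 1) :
    0 ≤ 2 * (p c).re + (w * (R ^ k * (iteratedDeriv k p c / k !))).re := by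
  have hint : CircleIntegrable (fun z ↦ (2 + 2 * (w * (R / (z - c)) ^ k).re) • p z) c R := by
    have hpc : ContinuousOn p (sphere c R) :=
      hp.continuousOn_ball.mono sphere_subset_closedBall
    have hne : ∀ z ∈ sphere c R, z - c ≠ 0 := fun z hz ↦
      sub_ne_zero.mpr (ne_of_mem_sphere hz hR.ne')
    exact ContinuousOn.circleIntegrable hR.le (by fun_prop (disch := assumption))
  have hre_avg := reCLM.circleAverage_comp_comm hint
  rw [circleAverage_two_add_two_re_mul hR hp hk] at hre_avg
  calc 0 ≤ circleAverage (reCLM ∘ fun z ↦ (2 + 2 * (w * (R / (z - c)) ^ k).re) • p z) c R := by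
        refine circleAverage_nonneg_of_nonneg fun z hz ↦ ?_
        rw [abs_of_pos hR] at hz
        simpa only [Function.comp_apply, reCLM_apply, smul_re, smul_eq_mul] using
          mul_nonneg (two_add_two_re_mul_div_sub_pow_nonneg hw hz) (hre z hz)
    _ = _ := by rw [hre_avg]; simp

lemma pow_mul_norm_iteratedDeriv_le_of_re_nonneg_on_sphere (hR : 0 < R)
    (hp : DiffContOnCl ℂ p (ball c R)) (hre : ∀ z ∈ sphere c R, 0 ≤ (p z).re) (hk : k ≠ 0) :
    R ^ k * (‖iteratedDeriv k p c‖ / k !) ≤ 2 * (p c).re := by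
  set d : ℂ := R ^ k * (iteratedDeriv k p c / k !)
  have hd : ‖d‖ = R ^ k * (‖iteratedDeriv k p c‖ / k !) := by simp [d, abs_of_pos hR]
  have hw : ‖-(conj d / ‖d‖)‖ ≤ 1 := by simpa using div_self_le_one ‖d‖
  have hwd : -(conj d / ‖d‖) * d = ((-‖d‖ : ℝ) : ℂ) := by
    rw [neg_mul, div_mul_eq_mul_div, conj_mul', ofReal_neg, sq, mul_self_div_self]
  have key := two_re_add_re_mul_iteratedDeriv_nonneg hR hp hre hk hw
  rw [hwd, ofReal_re] at key
  linarith

lemma pow_mul_norm_iteratedDeriv_le_of_re_nonneg (hR : 0 < R)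
    (hp : DifferentiableOn ℂ p (ball c R)) (hre : ∀ z ∈ ball c R, 0 ≤ (p z).re) (hk : k ≠ 0) :
    R ^ k * (‖iteratedDeriv k p c‖ / k !) ≤ 2 * (p c).re := by
  have hlim : Tendsto (fun r ↦ r ^ k * (‖iteratedDeriv k p c‖ / k !)) (𝓝[<] R)
      (𝓝 (R ^ k * (‖iteratedDeriv k p c‖ / k !))) :=
    (Continuous.tendsto (by fun_prop) R).mono_left nhdsWithin_le_nhds
  refine le_of_tendsto hlim ?_
  filter_upwards [Ioo_mem_nhdsLT hR] with r ⟨hr, hrR⟩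
  exact pow_mul_norm_iteratedDeriv_le_of_re_nonneg_on_sphere hr
    (hp.mono (closure_ball_subset_closedBall.trans (closedBall_subset_ball hrR))).diffContOnCl
    (fun z hz ↦ hre z (sphere_subset_ball hrR hz)) hk

end Caratheodory

section PowerSeries

variable {R : ℝ}

section RCLike

variable {𝕜 : Type*} [RCLike 𝕜] {f : 𝕜 → 𝕜} {a : ℕ → 𝕜}

lemma hasFPowerSeriesOnBall_ofScalars_of_hasSum (hR : 0 < R)
    (hf : ∀ z ∈ ball (0 : 𝕜) R, HasSum (fun k ↦ a k * z ^ k) (f z)) :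
    HasFPowerSeriesOnBall f (.ofScalars 𝕜 a) 0 (.ofReal R) where
  r_le := by
    refine ENNReal.le_of_forall_nnreal_lt fun r hr ↦ ?_
    have hr_mem : ((r : ℝ) : 𝕜) ∈ ball (0 : 𝕜) R := by
      simpa [ENNReal.lt_ofReal_iff_toReal_lt] using hr
    refine FormalMultilinearSeries.le_radius_of_tendsto (l := 0) _ ?_
    simpa using (hf _ hr_mem).summable.tendsto_atTop_zero.norm
  r_pos := by simpa using hR
  hasSum := fun {y} hy ↦ by
    rw [eball_ofReal] at hy
    simpa [mul_comm] using hf y hy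

lemma differentiableOn_of_hasSum
    (hf : ∀ z ∈ ball (0 : 𝕜) R, HasSum (fun k ↦ a k * z ^ k) (f z)) :
    DifferentiableOn 𝕜 f (ball 0 R) := by
  rcases le_or_gt R 0 with hR | hR
  · simp [ball_eq_empty.mpr hR, differentiableOn_empty]
  · simpa only [eball_ofReal] using
      (hasFPowerSeriesOnBall_ofScalars_of_hasSum hR hf).differentiableOn

lemma iteratedDeriv_eq_factorial_mul_of_hasSum (hR : 0 < R)
    (hf : ∀ z ∈ ball (0 : 𝕜) R, HasSum (fun k ↦ a k * z ^ k) (f z)) (k : ℕ) :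
    iteratedDeriv k f 0 = k ! * a k := by
  have := (hasFPowerSeriesOnBall_ofScalars_of_hasSum hR hf).factorial_smul 1 k
  rw [← iteratedDeriv_eq_iteratedFDeriv] at this
  simpa using this.symm

end RCLike

variable {f p : ℂ → ℂ} {a c : ℕ → ℂ}

lemma hasSum_deriv_of_hasSum (hf : ∀ z ∈ ball (0 : ℂ) R, HasSum (fun k ↦ a k * z ^ k) (f z))
    {z : ℂ} (hz : z ∈ ball (0 : ℂ) R) :
    HasSum (fun k : ℕ ↦ (k + 1) * a (k + 1) * z ^ k) (deriv f z) := by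
  have htaylor := hasSum_taylorSeries_on_ball ((differentiableOn_of_hasSum hf).deriv isOpen_ball) hz
  refine htaylor.congr_fun fun k ↦ ?_
  rw [← iteratedDeriv_succ', iteratedDeriv_eq_factorial_mul_of_hasSum (pos_of_mem_ball hz) hf,
    Nat.factorial_succ]
  have : (k ! : ℂ) ≠ 0 := mod_cast k.factorial_ne_zero
  simp only [smul_eq_mul, sub_zero]
  push_cast
  field_simp

lemma hasSum_one_sub_mul_deriv_of_hasSum
    (hf : ∀ z ∈ ball (0 : ℂ) R, HasSum (fun k ↦ a k * z ^ k) (f z))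
    {z : ℂ} (hz : z ∈ ball (0 : ℂ) R) :
    HasSum (fun k : ℕ ↦ ((k + 1) * a (k + 1) - k * a k) * z ^ k) ((1 - z) * deriv f z) := by
  have hderiv := hasSum_deriv_of_hasSum hf hz
  have hmul : HasSum (fun k : ℕ ↦ k * a k * z ^ k) (z * deriv f z) := by
    have hshift : HasSum (fun k : ℕ ↦ (k + 1 : ℕ) * a (k + 1) * z ^ (k + 1)) (z * deriv f z) :=
      (hderiv.mul_left z).congr_fun fun k ↦ by push_cast; ring
    simpa using (hasSum_nat_add_iff (f := fun k : ℕ ↦ k * a k * z ^ k) 1).mp hshift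
  rw [sub_mul, one_mul]
  exact (hderiv.sub hmul).congr_fun fun k ↦ by ring

lemma pow_mul_norm_coeff_le_of_le_re {β : ℝ} (hR : 0 < R)
    (hp : ∀ z ∈ ball (0 : ℂ) R, HasSum (fun k ↦ c k * z ^ k) (p z))
    (hre : ∀ z ∈ ball (0 : ℂ) R, β ≤ (p z).re) {k : ℕ} (hk : k ≠ 0) :
    R ^ k * ‖c k‖ ≤ 2 * ((c 0).re - β) := by
  have hp0 : p 0 = c 0 := by simpa using iteratedDeriv_eq_factorial_mul_of_hasSum hR hp 0
  have key := pow_mul_norm_iteratedDeriv_le_of_re_nonneg hR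
    ((differentiableOn_of_hasSum hp).const_add (-β : ℂ))
    (fun z hz ↦ by simpa using hre z hz) hk
  rw [iteratedDeriv_const_add hk.pos, iteratedDeriv_eq_factorial_mul_of_hasSum hR hp] at key
  have hfact : (k ! : ℝ) ≠ 0 := mod_cast k.factorial_ne_zero
  simpa [hp0, hfact, neg_add_eq_sub] using key

end PowerSeries

theorem coeff_bound_F1_beta_general {β : ℝ} {f : ℂ → ℂ} {a : ℕ → ℂ}
    (hf : ∀ z ∈ ball (0 : ℂ) 1, HasSum (fun k ↦ a k * z ^ k) (f z))
    (hre : ∀ z ∈ ball (0 : ℂ) 1, β ≤ ((1 - z) * deriv f z).re) {n : ℕ} (hn : 1 ≤ n) :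
    ‖a n‖ ≤ (‖a 1‖ + 2 * ((n : ℝ) - 1) * ((a 1).re - β)) / n := by
  have hstep : ∀ k, 1 ≤ k →
      dist (k * a k) ((k + 1 : ℕ) * a (k + 1)) ≤ 2 * ((a 1).re - β) := fun k hk ↦ by
    have := pow_mul_norm_coeff_le_of_le_re one_pos
      (fun z hz ↦ hasSum_one_sub_mul_deriv_of_hasSum hf hz) hre (Nat.one_le_iff_ne_zero.mp hk)
    simpa [dist_eq_norm'] using this
  have htotal := dist_le_Ico_sum_of_dist_le hn (f := fun k : ℕ ↦ k * a k)
    (fun {k} hk _ ↦ hstep k hk)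
  rw [le_div_iff₀ (by positivity)]
  calc ‖a n‖ * n = ‖n * a n‖ := by simp [mul_comm]
    _ ≤ ‖a 1‖ + dist (a 1) (n * a n) := by
      simpa only [dist_eq_norm] using norm_le_norm_add_norm_sub (a 1) (n * a n)
    _ ≤ ‖a 1‖ + (n - 1) * (2 * ((a 1).re - β)) := by
      gcongr
      simpa [Nat.cast_sub hn] using htotal
    _ = ‖a 1‖ + 2 * (n - 1) * ((a 1).re - β) := by ring

theorem coeff_bound_F1_beta
    (β : ℝ) (hβ : β < 1) (B : ℕ → ℝ)
    (hB : ∀ n, 2 ≤ n → B n = (1 + 2 * ((n : ℝ) - 1) * (1 - β)) / n)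
    (f : ℂ → ℂ) (a : ℕ → ℂ)
    (ha0 : a 0 = 0) (ha1 : a 1 = 1)
    (hf : ∀ z ∈ Metric.ball (0 : ℂ) 1, HasSum (fun k => a k * z ^ k) (f z))
    (hre : ∀ z ∈ Metric.ball (0 : ℂ) 1, β < ((1 - z) * deriv f z).re)
    (n : ℕ) (hn : 2 ≤ n) :
    ‖a n‖ ≤ B n := by
  simpa [hB n hn, ha1] using
    coeff_bound_F1_beta_general hf (fun z hz ↦ (hre z hz).le) (one_le_two.trans hn)
end

section
/- Let f(z) = z + Σ_{n≥2} a_n zⁿ be analytic on the open unit disc 𝔻 with Re((1−z)f′(z)) > 0 for all z ∈ 𝔻. Then for every integer n ≥ 2 and every real μ with μ ≥ n²/(2n−1), one has |μ a_n² − a_{2n−1}| ≤ μ(2n−1)²/n² + (3−4n)/(2n−1). -/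
/-!
Put `p z = (1 - z) f'(z) = ∑ bₖ zᵏ`. Then `n aₙ = b₀ + ⋯ + bₙ₋₁`, while `Re p > 0` and `p 0 = 1`.
For `r < 1` the density `Re p(r e^{it})` is a probability measure on the circle whose moments are
`bₖ rᵏ / 2`; hence `|bₖ| ≤ 2`, and Livingston's inequality `|bᵢ₊ⱼ - bᵢ bⱼ| ≤ 2` is an instance of
`|𝔼[u v] - 2 𝔼[u] 𝔼[v]| ≤ 1` for random variables in the closed unit disc. Since `b₀ = 1`,
`(m aₘ) (n aₙ) - (m + n - 1) aₘ₊ₙ₋₁` equals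
`(b₀ + ⋯ + bₘ₋₂) (b₁ + ⋯ + bₙ₋₁) - ∑_{1 ≤ j < n} (bₘ₋₁₊ⱼ - bₘ₋₁ bⱼ)`, whose modulus is at most
`(2m - 3) · 2(n - 1) + 2(n - 1) = 4 (m - 1) (n - 1)` for `m ≥ 2`. Finally `μ aₘ aₙ - aₘ₊ₙ₋₁` is a
nonnegative combination of this difference and of `(m aₘ) (n aₙ)`, whose modulus is at most
`(2m - 1) (2n - 1)`.
-/

open MeasureTheory AddCircle
open scoped ComplexConjugate NNReal

section PowerSeries

variable {𝕜 : Type*} [RCLike 𝕜] {f : 𝕜 → 𝕜} {a : ℕ → 𝕜} {R : ℝ≥0}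

lemma hasFPowerSeriesOnBall_ofScalars (hR : 0 < R)
    (hf : ∀ z ∈ Metric.ball (0 : 𝕜) R, HasSum (fun k ↦ a k * z ^ k) (f z)) :
    HasFPowerSeriesOnBall f (FormalMultilinearSeries.ofScalars 𝕜 a) 0 R where
  r_le := by
    refine ENNReal.le_of_forall_nnreal_lt fun r hr ↦
      FormalMultilinearSeries.le_radius_of_summable _ ?_
    have hr_mem : ((r : ℝ) : 𝕜) ∈ Metric.ball (0 : 𝕜) R := by simpa using hr
    simpa [FormalMultilinearSeries.ofScalars_norm] using (hf _ hr_mem).summable.norm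
  r_pos := by exact_mod_cast hR
  hasSum {z} hz := by
    rw [Metric.eball_coe] at hz
    simpa [FormalMultilinearSeries.ofScalars_apply_eq, mul_comm] using hf z hz

lemma hasSum_deriv_of_hasSum_pow
    (hf : ∀ z ∈ Metric.ball (0 : 𝕜) R, HasSum (fun k ↦ a k * z ^ k) (f z))
    {z : 𝕜} (hz : z ∈ Metric.ball 0 (R : ℝ)) :
    HasSum (fun k : ℕ ↦ (k + 1) * a (k + 1) * z ^ k) (deriv f z) := by
  have hR : 0 < R := Metric.pos_of_mem_ball hz
  have h_fderiv := (hasFPowerSeriesOnBall_ofScalars hR hf).fderiv.hasSum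
    (y := z) (by rwa [Metric.eball_coe])
  simpa [mul_comm] using (ContinuousLinearMap.apply 𝕜 𝕜 (1 : 𝕜)).hasSum h_fderiv

end PowerSeries

section Livingston

variable {Ω E : Type*} [MeasurableSpace Ω] {ν : Measure Ω} [IsProbabilityMeasure ν]
  [NormedAddCommGroup E] [InnerProductSpace ℂ E]

open scoped InnerProductSpace

lemma norm_sub_two_smul_le {v : E} (hv : ‖v‖ ≤ 1) (c : E) :
    ‖v - (2 : ℂ) • c‖ ≤ 1 + 2 * ‖c‖ ^ 2 - 2 * RCLike.re ⟪c, v⟫_ℂ := by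
  have h_expand : ‖v - (2 : ℂ) • c‖ ^ 2 = ‖v‖ ^ 2 - 4 * RCLike.re ⟪c, v⟫_ℂ + 4 * ‖c‖ ^ 2 := by
    have h_re : RCLike.re (2 * ⟪v, c⟫_ℂ) = 2 * RCLike.re ⟪c, v⟫_ℂ := by
      rw [inner_re_symm c v]; simp
    rw [norm_sub_sq (𝕜 := ℂ), inner_smul_right, h_re, norm_smul, RCLike.norm_ofNat]
    ring
  have : ‖v‖ ^ 2 ≤ 1 := pow_le_one₀ (norm_nonneg v) hv
  linarith [sq_nonneg (‖v - (2 : ℂ) • c‖ - 1)]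

-- The factor `2` is what makes `𝔼‖v - 2c‖² = 𝔼‖v‖²` for `c = 𝔼[v]`.
theorem norm_integral_smul_sub_two_smul_le_one [CompleteSpace E] {u : Ω → ℂ} {v : Ω → E}
    (hu : AEStronglyMeasurable u ν) (hv : AEStronglyMeasurable v ν)
    (hu_le : ∀ᵐ ω ∂ν, ‖u ω‖ ≤ 1) (hv_le : ∀ᵐ ω ∂ν, ‖v ω‖ ≤ 1) :
    ‖(∫ ω, u ω • v ω ∂ν) - (2 : ℂ) • (∫ ω, u ω ∂ν) • ∫ ω, v ω ∂ν‖ ≤ 1 := by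
  have hu_int : Integrable u ν := .of_bound hu 1 hu_le
  have hv_int : Integrable v ν := .of_bound hv 1 hv_le
  set c := ∫ ω, v ω ∂ν
  have h_inner : ∫ ω, RCLike.re ⟪c, v ω⟫_ℂ ∂ν = ‖c‖ ^ 2 := by
    rw [integral_re (hv_int.const_inner c), integral_inner hv_int, inner_self_eq_norm_sq]
  have h_collect : (∫ ω, u ω • v ω ∂ν) - (2 : ℂ) • (∫ ω, u ω ∂ν) • c
      = ∫ ω, u ω • (v ω - (2 : ℂ) • c) ∂ν := by
    simp_rw [smul_sub]
    have huv_int : Integrable (fun ω ↦ u ω • v ω) ν := hv_int.bdd_smul 1 hu hu_le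
    rw [integral_sub huv_int (hu_int.smul_const _), integral_smul_const, smul_comm]
  have h_le : ∀ᵐ ω ∂ν, ‖u ω • (v ω - (2 : ℂ) • c)‖
      ≤ 1 + 2 * ‖c‖ ^ 2 - 2 * RCLike.re ⟪c, v ω⟫_ℂ := by
    filter_upwards [hu_le, hv_le] with ω hu_le hv_le
    rw [norm_smul]
    exact (mul_le_of_le_one_left (norm_nonneg _) hu_le).trans (norm_sub_two_smul_le hv_le c)
  have h_re_int : Integrable (fun ω ↦ 2 * RCLike.re ⟪c, v ω⟫_ℂ) ν :=
    (hv_int.const_inner c).re.const_mul 2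
  calc ‖(∫ ω, u ω • v ω ∂ν) - (2 : ℂ) • (∫ ω, u ω ∂ν) • c‖
      ≤ ∫ ω, (1 + 2 * ‖c‖ ^ 2 - 2 * RCLike.re ⟪c, v ω⟫_ℂ) ∂ν := by
        rw [h_collect]
        exact norm_integral_le_of_norm_le ((integrable_const _).sub h_re_int) h_le
    _ = 1 := by
        rw [integral_sub (integrable_const _) h_re_int, integral_const_mul, h_inner]
        simp

end Livingston

section Fourier

variable {T : ℝ} {ι : Type*} {c : ι → ℂ} {m : ι → ℤ} {F : AddCircle T → ℂ}

lemma norm_fourier_apply (n : ℤ) (t : AddCircle T) : ‖fourier n t‖ = 1 := by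
  rw [fourier_apply, Circle.norm_coe]

lemma continuous_of_hasSum_fourier (hc : Summable c)
    (hF : ∀ t, HasSum (fun i ↦ c i * fourier (m i) t) (F t)) : Continuous F := by
  obtain rfl : F = fun t ↦ ∑' i, c i * fourier (m i) t := funext fun t ↦ (hF t).tsum_eq.symm
  refine continuous_tsum (fun i ↦ by fun_prop) hc.norm fun i t ↦ ?_
  rw [norm_mul, norm_fourier_apply, mul_one]

variable [Fact (0 < T)]

lemma hasSum_fourierCoeff_of_hasSum_fourier [Countable ι] (hc : Summable c)
    (hF : ∀ t, HasSum (fun i ↦ c i * fourier (m i) t) (F t)) (n : ℤ) :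
    HasSum (fun i ↦ c i * (Pi.single (m i) 1 : ℤ → ℂ) n) (fourierCoeff F n) := by
  let G (i : ι) (t : AddCircle T) : ℂ := fourier (-n) t * (c i * fourier (m i) t)
  have hG_integral (i : ι) : ∫ t, G i t ∂haarAddCircle = c i * (Pi.single (m i) 1 : ℤ → ℂ) n := by
    rw [← fourierCoeff_fourier (T := T), ← fourierCoeff.const_mul]
    rfl
  have hG_norm (i : ι) (t : AddCircle T) : ‖G i t‖ = ‖c i‖ := by
    simp only [G, norm_mul, norm_fourier_apply, one_mul, mul_one]
  have hG_tsum (t : AddCircle T) : ∑' i, G i t = fourier (-n) t • F t :=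
    ((hF t).mul_left _).tsum_eq
  have hG_int (i : ι) : Integrable (G i) haarAddCircle :=
    (by fun_prop : Continuous (G i)).integrable_of_hasCompactSupport (.of_compactSpace _)
  have h := hasSum_integral_of_summable_integral_norm hG_int
    (by simpa only [hG_norm, integral_const, probReal_univ, one_smul] using hc.norm)
  simp only [hG_integral, hG_tsum] at h
  exact h

lemma fourierCoeff_natCast_of_hasSum_fourier {c : ℕ → ℂ} (hc : Summable c)
    (hF : ∀ t, HasSum (fun k : ℕ ↦ c k * fourier k t) (F t)) (k : ℕ) :
    fourierCoeff F k = c k := by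
  simpa using (hasSum_fourierCoeff_of_hasSum_fourier hc hF k).unique
    (hasSum_single k fun j hj ↦ by simp [hj.symm])

lemma fourierCoeff_of_neg_of_hasSum_fourier {c : ℕ → ℂ} (hc : Summable c)
    (hF : ∀ t, HasSum (fun k : ℕ ↦ c k * fourier k t) (F t)) {n : ℤ} (hn : n < 0) :
    fourierCoeff F n = 0 := by
  refine (hasSum_fourierCoeff_of_hasSum_fourier hc hF n).unique ?_
  convert hasSum_zero with k
  rw [Pi.single_eq_of_ne (by omega), mul_zero]

lemma fourierCoeff_ofReal_re (hF : Integrable F haarAddCircle) (n : ℤ) :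
    fourierCoeff (fun t ↦ ((F t).re : ℂ)) n
      = (fourierCoeff F n + conj (fourierCoeff F (-n))) / 2 := by
  have h_conj : conj (fourierCoeff F (-n)) = fourierCoeff (fun t ↦ conj (F t)) n := by
    simp only [fourierCoeff, ← integral_conj, smul_eq_mul, map_mul, ← fourier_neg, neg_neg]
  have h_re : (fun t ↦ ((F t).re : ℂ)) = (1 / 2 : ℂ) • (F + fun t ↦ conj (F t)) := by
    ext t
    simp [Complex.re_eq_add_conj, div_eq_inv_mul]
  have hF_conj : Integrable (fun t ↦ conj (F t)) haarAddCircle :=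
    Complex.conjCLE.toContinuousLinearMap.integrable_comp hF
  rw [h_conj, h_re, fourierCoeff.const_smul, fourierCoeff.add hF hF_conj, Pi.add_apply,
    smul_eq_mul, one_div_mul_eq_div]

lemma integral_fourier_withDensity {w : AddCircle T → ℝ} (hw : Integrable w haarAddCircle)
    (hw_nonneg : 0 ≤ w) (n : ℤ) :
    ∫ t, fourier (-n) t ∂haarAddCircle.withDensity (fun t ↦ ENNReal.ofReal (w t))
      = fourierCoeff (fun t ↦ (w t : ℂ)) n := by
  rw [integral_withDensity_eq_integral_toReal_smul₀ hw.aemeasurable.ennreal_ofReal (by simp)]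
  refine integral_congr_ae (.of_forall fun t ↦ ?_)
  simp only [ENNReal.toReal_ofReal (hw_nonneg t), Complex.real_smul, smul_eq_mul, mul_comm]

theorem exists_isProbabilityMeasure_integral_fourier {c : ℕ → ℂ} (hc : Summable c)
    (hc_zero : c 0 = 1) (hF : ∀ t, HasSum (fun k : ℕ ↦ c k * fourier k t) (F t))
    (hF_re : ∀ t, 0 ≤ (F t).re) :
    ∃ ν : Measure (AddCircle T), IsProbabilityMeasure ν ∧
      ∀ k : ℕ, k ≠ 0 → ∫ t, fourier (-k) t ∂ν = c k / 2 := by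
  have hF_int : Integrable F haarAddCircle :=
    (continuous_of_hasSum_fourier hc hF).integrable_of_hasCompactSupport (.of_compactSpace _)
  let ν : Measure (AddCircle T) := haarAddCircle.withDensity fun t ↦ ENNReal.ofReal (F t).re
  have h_moment (n : ℤ) :
      ∫ t, fourier (-n) t ∂ν = (fourierCoeff F n + conj (fourierCoeff F (-n))) / 2 := by
    refine (integral_fourier_withDensity hF_int.re hF_re n).trans ?_
    rw [← fourierCoeff_ofReal_re hF_int]
    rfl
  refine ⟨ν, isProbabilityMeasure_iff_real.2 ?_, fun k hk ↦ ?_⟩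
  · have h_zero : fourierCoeff F 0 = 1 := by
      rw [← hc_zero]; exact fourierCoeff_natCast_of_hasSum_fourier hc hF 0
    simpa [h_zero] using h_moment 0
  · rw [h_moment, fourierCoeff_natCast_of_hasSum_fourier hc hF,
      fourierCoeff_of_neg_of_hasSum_fourier hc hF (by omega), map_zero, add_zero]

end Fourier

lemma le_of_forall_mul_pow_le {x C : ℝ} (k : ℕ) (h : ∀ r ∈ Set.Ioo (0 : ℝ) 1, x * r ^ k ≤ C) :
    x ≤ C := by
  have h_tendsto : Filter.Tendsto (fun r : ℝ ↦ x * r ^ k) (nhdsWithin 1 (Set.Iio 1)) (nhds x) := by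
    have : Continuous fun r : ℝ ↦ x * r ^ k := by fun_prop
    simpa using (this.tendsto 1).mono_left nhdsWithin_le_nhds
  exact le_of_tendsto h_tendsto <| Filter.mem_of_superset (Ioo_mem_nhdsLT one_pos) h

/-- The Carathéodory class of functions on the unit disc with nonnegative real part and value `1`
at `0`, encoded as a relation between the function `p` and its Taylor coefficients `b` at `0`.
By the open mapping theorem, requiring positive real part instead would give the same class. -/
structure IsCaratheodory (p : ℂ → ℂ) (b : ℕ → ℂ) : Prop where
  hasSum : ∀ z ∈ Metric.ball (0 : ℂ) 1, HasSum (fun k ↦ b k * z ^ k) (p z)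
  re_nonneg : ∀ z ∈ Metric.ball (0 : ℂ) 1, 0 ≤ (p z).re
  coeff_zero : b 0 = 1

namespace IsCaratheodory

variable {p : ℂ → ℂ} {b : ℕ → ℂ}

lemma exists_isProbabilityMeasure (h : IsCaratheodory p b) {r : ℝ} (hr : r ∈ Set.Ioo 0 1) :
    ∃ ν : Measure UnitAddCircle, IsProbabilityMeasure ν ∧
      ∀ k : ℕ, k ≠ 0 → ∫ t, fourier (-k) t ∂ν = b k * r ^ k / 2 := by
  have h_ball (t : UnitAddCircle) : r * fourier 1 t ∈ Metric.ball (0 : ℂ) 1 := by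
    rw [mem_ball_zero_iff, norm_mul, norm_fourier_apply, mul_one, Complex.norm_of_nonneg hr.1.le]
    exact hr.2
  have h_pow (k : ℕ) (t : UnitAddCircle) : (fourier 1 t) ^ k = fourier k t := by
    rw [fourier_one, fourier_apply, natCast_zsmul, toCircle_nsmul, Circle.coe_pow]
  refine exists_isProbabilityMeasure_integral_fourier (F := fun t ↦ p (r * fourier 1 t))
    (c := fun k ↦ b k * r ^ k) ?_ (by simp [h.coeff_zero]) (fun t ↦ ?_)
    fun t ↦ h.re_nonneg _ (h_ball t)
  · simpa using (h.hasSum _ (h_ball 0)).summable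
  · simpa only [mul_pow, h_pow, mul_assoc] using h.hasSum _ (h_ball t)

theorem norm_coeff_le_two (h : IsCaratheodory p b) {k : ℕ} (hk : k ≠ 0) : ‖b k‖ ≤ 2 := by
  refine le_of_forall_mul_pow_le k fun r hr ↦ ?_
  obtain ⟨ν, _, hν⟩ := h.exists_isProbabilityMeasure hr
  have h_norm : ‖b k * r ^ k / 2‖ ≤ 1 := by
    rw [← hν k hk]
    refine (norm_integral_le_of_norm_le_const (C := 1) (.of_forall fun t ↦ ?_)).trans ?_
    · exact (norm_fourier_apply _ t).le
    · simp
  rw [norm_div, norm_mul, norm_pow, Complex.norm_of_nonneg hr.1.le, Complex.norm_two] at h_norm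
  linarith

theorem norm_coeff_add_sub_mul_le_two (h : IsCaratheodory p b) {i j : ℕ} (hi : i ≠ 0)
    (hj : j ≠ 0) : ‖b (i + j) - b i * b j‖ ≤ 2 := by
  refine le_of_forall_mul_pow_le (i + j) fun r hr ↦ ?_
  obtain ⟨ν, _, hν⟩ := h.exists_isProbabilityMeasure hr
  have h_liv := norm_integral_smul_sub_two_smul_le_one (ν := ν) (u := fourier (-i))
    (v := fourier (-j)) (map_continuous _).aestronglyMeasurable
    (map_continuous _).aestronglyMeasurable (.of_forall fun t ↦ (norm_fourier_apply _ t).le)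
    (.of_forall fun t ↦ (norm_fourier_apply _ t).le)
  have h_mul (t : UnitAddCircle) :
      fourier (-i) t • fourier (-j) t = fourier (-(i + j : ℕ)) t := by
    rw [smul_eq_mul, ← fourier_add, Nat.cast_add, neg_add]
  have h_eq : b (i + j) * r ^ (i + j) / 2 - 2 * (b i * r ^ i / 2 * (b j * r ^ j / 2))
      = (b (i + j) - b i * b j) * r ^ (i + j) / 2 := by ring
  simp only [h_mul, hν _ hi, hν _ hj, hν _ (by omega : i + j ≠ 0), smul_eq_mul, h_eq] at h_liv
  rw [norm_div, norm_mul, norm_pow, Complex.norm_of_nonneg hr.1.le, Complex.norm_two] at h_liv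
  linarith

end IsCaratheodory

section PartialSums

open Finset

lemma sum_range_mul_sum_range_sub_sum_range {A : Type*} [CommRing A] {b : ℕ → A}
    (hb_zero : b 0 = 1) (m n : ℕ) :
    (∑ k ∈ range (m + 1), b k) * (∑ k ∈ range (n + 1), b k) - ∑ k ∈ range (m + n + 1), b k
      = (∑ k ∈ range m, b k) * (∑ k ∈ range n, b (k + 1))
        - ∑ k ∈ range n, (b (m + (k + 1)) - b m * b (k + 1)) := by
  have h_split : ∑ k ∈ range (m + n + 1), b k
      = ∑ k ∈ range (m + 1), b k + ∑ k ∈ range n, b (m + (k + 1)) := by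
    rw [add_right_comm, sum_range_add]
    simp only [add_assoc, add_comm 1]
  rw [h_split, sum_range_succ' b n, hb_zero, sum_range_succ b m, sum_sub_distrib, ← mul_sum]
  ring

namespace IsCaratheodory

variable {p : ℂ → ℂ} {b : ℕ → ℂ}

lemma norm_sum_range_coeff_add_one_le (h : IsCaratheodory p b) (n : ℕ) :
    ‖∑ k ∈ range n, b (k + 1)‖ ≤ 2 * n := by
  simpa [mul_comm] using
    norm_sum_le_of_le (range n) fun k _ ↦ h.norm_coeff_le_two k.succ_ne_zero

lemma norm_sum_range_add_one_le (h : IsCaratheodory p b) (n : ℕ) :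
    ‖∑ k ∈ range (n + 1), b k‖ ≤ 2 * n + 1 := by
  rw [sum_range_succ', h.coeff_zero]
  exact norm_add_le_of_le (h.norm_sum_range_coeff_add_one_le n) norm_one.le

theorem norm_sum_range_mul_sum_range_sub_sum_range_le (h : IsCaratheodory p b) (m n : ℕ) :
    ‖(∑ k ∈ range (m + 1), b k) * (∑ k ∈ range (n + 1), b k) - ∑ k ∈ range (m + n + 1), b k‖
      ≤ 4 * m * n := by
  rcases m with - | m
  · simp [h.coeff_zero]
  have h_prod : ‖(∑ k ∈ range (m + 1), b k) * ∑ k ∈ range n, b (k + 1)‖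
      ≤ (2 * m + 1) * (2 * n) :=
    norm_mul_le_of_le (h.norm_sum_range_add_one_le m) (h.norm_sum_range_coeff_add_one_le n)
  have h_defect : ‖∑ k ∈ range n, (b (m + 1 + (k + 1)) - b (m + 1) * b (k + 1))‖ ≤ 2 * n := by
    simpa [mul_comm] using norm_sum_le_of_le (range n)
      fun k _ ↦ h.norm_coeff_add_sub_mul_le_two m.succ_ne_zero k.succ_ne_zero
  rw [sum_range_mul_sum_range_sub_sum_range h.coeff_zero]
  refine (norm_sub_le_of_le h_prod h_defect).trans_eq ?_
  push_cast
  ring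

end IsCaratheodory

end PartialSums

lemma norm_smul_sub_smul_le {E : Type*} [SeminormedAddCommGroup E] [NormedSpace ℝ E] {x y : E}
    {s t A B : ℝ} (ht : 0 ≤ t) (hts : t ≤ s) (hx : ‖x‖ ≤ A) (hxy : ‖x - y‖ ≤ B) :
    ‖s • x - t • y‖ ≤ (s - t) * A + t * B :=
  calc ‖s • x - t • y‖ = ‖(s - t) • x + t • (x - y)‖ := by congr 1; module
    _ ≤ (s - t) * A + t * B := by
      refine norm_add_le_of_le ?_ ?_
      · rw [norm_smul, Real.norm_of_nonneg (sub_nonneg.2 hts)]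
        exact mul_le_mul_of_nonneg_left hx (sub_nonneg.2 hts)
      · rw [norm_smul, Real.norm_of_nonneg ht]
        exact mul_le_mul_of_nonneg_left hxy ht

lemma norm_mul_mul_sub_le {x y w : ℂ} {m n k : ℕ} (hm : m ≠ 0) (hn : n ≠ 0) (hk : k ≠ 0)
    {μ A B : ℝ} (hμ : (m * n : ℝ) / k ≤ μ) (h_prod : ‖(m * x) * (n * y)‖ ≤ A)
    (h_defect : ‖(m * x) * (n * y) - k * w‖ ≤ B) :
    ‖μ * (x * y) - w‖ ≤ (μ / (m * n) - 1 / k) * A + 1 / k * B := by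
  have h_weight : 1 / (k : ℝ) ≤ μ / (m * n) := by
    rw [div_le_iff₀ (by positivity)] at hμ
    rw [div_le_div_iff₀ (by positivity) (by positivity)]
    linarith
  have h_eq : μ * (x * y) - w
      = (μ / (m * n) : ℝ) • ((m * x) * (n * y)) - (1 / k : ℝ) • (k * w) := by
    simp only [Complex.real_smul]
    push_cast
    field_simp
  rw [h_eq]
  exact norm_smul_sub_smul_le (by positivity) h_weight h_prod h_defect

lemma hasSum_one_sub_mul_deriv {f : ℂ → ℂ} {a : ℕ → ℂ}
    (hf : ∀ z ∈ Metric.ball (0 : ℂ) 1, HasSum (fun k ↦ a k * z ^ k) (f z))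
    {z : ℂ} (hz : z ∈ Metric.ball 0 1) :
    HasSum (fun k : ℕ ↦ ((k + 1 : ℕ) * a (k + 1) - k * a k) * z ^ k) ((1 - z) * deriv f z) := by
  have h_deriv : HasSum (fun k : ℕ ↦ (k + 1) * a (k + 1) * z ^ k) (deriv f z) :=
    hasSum_deriv_of_hasSum_pow (R := 1) hf hz
  have h_shift : HasSum (fun k : ℕ ↦ k * a k * z ^ k) (z * deriv f z) := by
    rw [← hasSum_nat_add_iff' 1]
    simpa [pow_succ', mul_left_comm] using h_deriv.mul_left z
  rw [sub_mul, one_mul]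
  simpa only [sub_mul, Nat.cast_succ] using h_deriv.sub h_shift

theorem zalcman_F1_zero_diagonal_general (f : ℂ → ℂ) (a : ℕ → ℂ) (ha1 : a 1 = 1)
    (hf : ∀ z ∈ Metric.ball (0 : ℂ) 1, HasSum (fun k ↦ a k * z ^ k) (f z))
    (hre : ∀ z ∈ Metric.ball (0 : ℂ) 1, 0 ≤ ((1 - z) * deriv f z).re)
    (m n : ℕ) (hm : 1 ≤ m) (hn : 1 ≤ n) (μ : ℝ) (hμ : (m * n : ℝ) / (m + n - 1) ≤ μ) :
    ‖(μ : ℂ) * (a m * a n) - a (m + n - 1)‖ ≤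
      μ * ((2 * m - 1) * (2 * n - 1)) / (m * n) + (3 - 2 * (m + n)) / (m + n - 1) := by
  let b (k : ℕ) : ℂ := (k + 1 : ℕ) * a (k + 1) - k * a k
  have hb : IsCaratheodory (fun z ↦ (1 - z) * deriv f z) b :=
    ⟨fun z hz ↦ hasSum_one_sub_mul_deriv hf hz, hre, by simp [b, ha1]⟩
  have hb_sum (k : ℕ) : ∑ i ∈ Finset.range k, b i = k * a k :=
    (Finset.sum_range_sub (fun i : ℕ ↦ i * a i) k).trans (by simp)
  obtain ⟨m, rfl⟩ := Nat.exists_eq_add_of_le' hm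
  obtain ⟨n, rfl⟩ := Nat.exists_eq_add_of_le' hn
  have h_prod := norm_mul_le_of_le (hb.norm_sum_range_add_one_le m) (hb.norm_sum_range_add_one_le n)
  have h_defect := hb.norm_sum_range_mul_sum_range_sub_sum_range_le m n
  simp only [hb_sum] at h_prod h_defect
  have h_cast : ((m + 1 : ℕ) + (n + 1 : ℕ) - 1 : ℝ) = (m + n + 1 : ℕ) := by push_cast; ring
  rw [h_cast] at hμ ⊢
  rw [show m + 1 + (n + 1) - 1 = m + n + 1 by omega]
  refine (norm_mul_mul_sub_le m.succ_ne_zero n.succ_ne_zero (m + n).succ_ne_zero hμ h_prod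
    h_defect).trans_eq ?_
  push_cast
  field_simp
  ring

theorem zalcman_F1_zero_diagonal
    (f : ℂ → ℂ) (a : ℕ → ℂ)
    (ha0 : a 0 = 0) (ha1 : a 1 = 1)
    (hf : ∀ z ∈ Metric.ball (0 : ℂ) 1, HasSum (fun k => a k * z ^ k) (f z))
    (hre : ∀ z ∈ Metric.ball (0 : ℂ) 1, 0 < ((1 - z) * deriv f z).re)
    (n : ℕ) (hn : 2 ≤ n) (μ : ℝ) (hμ : (n : ℝ) ^ 2 / (2 * (n : ℝ) - 1) ≤ μ) :
    ‖(μ : ℂ) * a n ^ 2 - a (2 * n - 1)‖ ≤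
      μ * (2 * (n : ℝ) - 1) ^ 2 / (n : ℝ) ^ 2 + (3 - 4 * (n : ℝ)) / (2 * (n : ℝ) - 1) := by
  have h := zalcman_F1_zero_diagonal_general f a ha1 hf (fun z hz ↦ (hre z hz).le) n n
    (by omega) (by omega) μ (by rwa [← sq, ← two_mul])
  convert h using 3 <;> ring_nf
end
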